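/- The trilinear map S³(f,g) := −P^{ls}(L_{X_f}∇)^j_{kl}(L_{X_g}∇)^k_{js} (the Flato–Lichnerowicz–Sternheimer operator, here bilinear) is a Chevalley 2-cocycle for the Poisson bracket: Σ_{cyclic u,v,w} [ {S³(u,v), w} + S³({u,v}, w) ] = 0. -/

import Mathlib

/- STATEMENT 12: the Flato–Lichnerowicz–Sternheimer operator S³(f,g) = −P^{ls}(L_{X_f}∇)^j_{kl}(L_{X_g}∇)^k_{js} is a Chevalley 2-cocycle for the Poisson bracket, in local coordinates on a chart of ℝ^d. -/
noncomputable section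
open scoped BigOperators

/-- points of the chart ℝ^d -/
abbrev E (d : ℕ) := Fin d → ℝ

/-- partial derivative in the `i`-th coordinate direction -/
def pd (d : ℕ) (i : Fin d) (f : E d → ℝ) (x : E d) : ℝ :=
  fderiv ℝ f x (Pi.single i 1)

/-- a tensor field with `p` covariant (lower) and `q` contravariant (upper) indices -/
abbrev Tensor (d p q : ℕ) := E d → (Fin p → Fin d) → (Fin q → Fin d) → ℝ

/-- Christoffel symbols: `Γ x k i j = Γ^k_{ij}(x)` -/
abbrev Christoffel (d : ℕ) := E d → Fin d → Fin d → Fin d → ℝ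

def SmoothChristoffel {d : ℕ} (Γ : Christoffel d) : Prop :=
  ∀ k i j, ContDiff ℝ (⊤ : ℕ∞) (fun x => Γ x k i j)

def Torsionfree {d : ℕ} (Γ : Christoffel d) : Prop :=
  ∀ x k i j, Γ x k i j = Γ x k j i

/-- covariant derivative of a `(p,q)`-tensor; the new covariant index comes first -/
def covD {d : ℕ} (Γ : Christoffel d) {p q : ℕ} (T : Tensor d p q) : Tensor d (p + 1) q :=
  fun x I K =>
    pd d (I 0) (fun y => T y (Fin.tail I) K) x
      - ∑ r : Fin p, ∑ m : Fin d,
          Γ x m (I 0) (Fin.tail I r) * T x (Function.update (Fin.tail I) r m) K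
      + ∑ r : Fin q, ∑ m : Fin d,
          Γ x (K r) (I 0) m * T x (Fin.tail I) (Function.update K r m)

/-- iterated covariant differential `∇^n f` of a function (`∇f = df`,
`∇^m f(X_1,…,X_m) = (∇_{X_1}∇^{m-1}f)(X_2,…,X_m)`) -/
def nablaF {d : ℕ} (Γ : Christoffel d) : (n : ℕ) → (E d → ℝ) → Tensor d n 0
  | 0, f => fun x _ _ => f x
  | (n + 1), f => covD Γ (nablaF Γ n f)

/-- curvature tensor: `curv Γ x s k l j = R^s_{klj}(x)` -/
def curv {d : ℕ} (Γ : Christoffel d) (x : E d) (s k l j : Fin d) : ℝ :=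
  pd d k (fun y => Γ y s l j) x - pd d l (fun y => Γ y s k j) x
    + ∑ t, (Γ x s k t * Γ x t l j - Γ x s l t * Γ x t k j)
/-- a bivector field as a `(0,2)`-tensor -/
def Ptensor {d : ℕ} (P : E d → Fin d → Fin d → ℝ) : Tensor d 0 2 :=
  fun x _ K => P x (K 0) (K 1)

/-- `∇_r P^{ij}` -/
def dP {d : ℕ} (Γ : Christoffel d) (P : E d → Fin d → Fin d → ℝ)
    (x : E d) (r i j : Fin d) : ℝ :=
  covD Γ (Ptensor P) x ![r] ![i, j]

/-- `∇²_{kl} P^{ij}` -/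
def d2P {d : ℕ} (Γ : Christoffel d) (P : E d → Fin d → Fin d → ℝ)
    (x : E d) (k l i j : Fin d) : ℝ :=
  covD Γ (covD Γ (Ptensor P)) x ![k, l] ![i, j]

/-- `∇_i f` -/
def d1f {d : ℕ} (Γ : Christoffel d) (f : E d → ℝ) (x : E d) (i : Fin d) : ℝ :=
  nablaF Γ 1 f x ![i] Fin.elim0

/-- `∇²_{kl} f` -/
def d2f {d : ℕ} (Γ : Christoffel d) (f : E d → ℝ) (x : E d) (k l : Fin d) : ℝ :=
  nablaF Γ 2 f x ![k, l] Fin.elim0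

/-- `∇³_{kli} f` -/
def d3f {d : ℕ} (Γ : Christoffel d) (f : E d → ℝ) (x : E d) (k l i : Fin d) : ℝ :=
  nablaF Γ 3 f x ![k, l, i] Fin.elim0

/-- `(L_{X_f}∇)^j_{kl} = P^{ij}∇³_{kli}f + ∇_kP^{ij}∇²_{li}f + ∇_lP^{ij}∇²_{ki}f
  + ∇²_{kl}P^{ij}∇_i f + R^j_{ikl}P^{si}∇_s f` -/
def LXnabla {d : ℕ} (Γ : Christoffel d) (P : E d → Fin d → Fin d → ℝ)
    (f : E d → ℝ) (x : E d) (j k l : Fin d) : ℝ :=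
  (∑ i, P x i j * d3f Γ f x k l i)
    + (∑ i, dP Γ P x k i j * d2f Γ f x l i)
    + (∑ i, dP Γ P x l i j * d2f Γ f x k i)
    + (∑ i, d2P Γ P x k l i j * d1f Γ f x i)
    + (∑ i, ∑ s, curv Γ x j i k l * P x s i * d1f Γ f x s)

/-- the Poisson bracket `{f,g} = P(df,dg)` -/
def pbr {d : ℕ} (P : E d → Fin d → Fin d → ℝ) (f g : E d → ℝ) (x : E d) : ℝ :=
  ∑ i, ∑ j, P x i j * pd d i f x * pd d j g x

/-- `S³(f,g) = −P^{ls}(L_{X_f}∇)^j_{kl}(L_{X_g}∇)^k_{js}` -/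
def S3 {d : ℕ} (Γ : Christoffel d) (P : E d → Fin d → Fin d → ℝ)
    (f g : E d → ℝ) (x : E d) : ℝ :=
  - ∑ l, ∑ s, ∑ k, ∑ j, P x l s * LXnabla Γ P f x j k l * LXnabla Γ P g x k j s

section Algebraic

open Matrix

variable {k R ι : Type*} [CommRing k] [CommRing R] [Algebra k R]

theorem map_der_add (δ : Derivation k R R) (M N : Matrix ι ι R) :
    (M + N).map δ = M.map δ + N.map δ := by
  ext i j; simp

theorem map_der_sub (δ : Derivation k R R) (M N : Matrix ι ι R) :
    (M - N).map δ = M.map δ - N.map δ := by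
  ext i j; simp

variable [Fintype ι]

/-- the derivation `∑ i, X i ∂_i` defined by a vector field `X` -/
def vecDer (D : ι → Derivation k R R) (X : ι → R) : Derivation k R R := ∑ i, X i • D i

/-- the matrix `J^j_i = ∂_i X^j` -/
def jac (D : ι → Derivation k R R) (X : ι → R) : Matrix ι ι R := of fun j i => D i (X j)

/-- the commutator of two vector fields -/
def vecBracket (D : ι → Derivation k R R) (X Y : ι → R) (j : ι) : R :=
  vecDer D X (Y j) - vecDer D Y (X j)

/-- the Lie derivative of a connection: `lieConn D G X l` has entries `(L_X ∇)^j_{kl}`,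
where `G l` is the matrix with entries `Γ^j_{lk}` -/
def lieConn (D : ι → Derivation k R R) (G : ι → Matrix ι ι R) (X : ι → R) (l : ι) :
    Matrix ι ι R :=
  (jac D X).map (D l) + (G l).map (vecDer D X) + (G l * jac D X - jac D X * G l)
    + ∑ i, jac D X i l • G i

/-- the Lie derivative of a tensor with two lower and one upper index, `A l` being the matrix
with entries `A^j_{kl}` -/
def lieTensor (D : ι → Derivation k R R) (X : ι → R) (A : ι → Matrix ι ι R) (l : ι) :
    Matrix ι ι R :=
  (A l).map (vecDer D X) + (A l * jac D X - jac D X * A l) + ∑ i, jac D X i l • A i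

theorem vecDer_apply (D : ι → Derivation k R R) (X : ι → R) (a : R) :
    vecDer D X a = ∑ i, X i * D i a := by
  have h := congrFun (map_sum (Derivation.coeFnAddMonoidHom (R := k) (A := R) (M := R))
    (fun i => X i • D i) Finset.univ) a
  exact h.trans (by simp [Derivation.coeFnAddMonoidHom])

theorem map_der_mul (δ : Derivation k R R) (M N : Matrix ι ι R) :
    (M * N).map δ = M.map δ * N + M * N.map δ := by
  ext i j
  simp only [map_apply, mul_apply, Matrix.add_apply, map_sum, Derivation.leibniz, smul_eq_mul,
    Finset.sum_add_distrib]
  rw [add_comm]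
  congr 1
  exact Finset.sum_congr rfl fun _ _ => mul_comm _ _

theorem map_der_sum_smul (δ : Derivation k R R) (c : ι → R) (M : ι → Matrix ι ι R) :
    (∑ i, c i • M i).map δ = ∑ i, δ (c i) • M i + ∑ i, c i • (M i).map δ := by
  ext a b
  simp only [map_apply, Matrix.sum_apply, Matrix.add_apply, Matrix.smul_apply, map_sum, Derivation.leibniz,
    smul_eq_mul, Finset.sum_add_distrib]
  rw [add_comm]
  congr 1
  exact Finset.sum_congr rfl fun _ _ => mul_comm _ _

theorem der_vecDer (D : ι → Derivation k R R) (hD : ∀ i j a, D i (D j a) = D j (D i a))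
    (X : ι → R) (l : ι) (a : R) :
    D l (vecDer D X a) = vecDer D X (D l a) + ∑ i, jac D X i l * D i a := by
  simp only [vecDer_apply, map_sum, Derivation.leibniz, smul_eq_mul, Finset.sum_add_distrib,
    jac, of_apply]
  congr 1
  · exact Finset.sum_congr rfl fun i _ => by rw [hD]
  · exact Finset.sum_congr rfl fun i _ => mul_comm _ _

theorem map_der_map_vecDer (D : ι → Derivation k R R)
    (hD : ∀ i j a, D i (D j a) = D j (D i a)) (X : ι → R) (l : ι) (M : Matrix ι ι R) :
    (M.map (vecDer D X)).map (D l)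
      = (M.map (D l)).map (vecDer D X) + ∑ i, jac D X i l • M.map (D i) := by
  ext a b
  simp [Matrix.sum_apply, der_vecDer D hD]

theorem vecDer_vecBracket (D : ι → Derivation k R R)
    (hD : ∀ i j a, D i (D j a) = D j (D i a)) (X Y : ι → R) (a : R) :
    vecDer D (vecBracket D X Y) a
      = vecDer D X (vecDer D Y a) - vecDer D Y (vecDer D X a) := by
  have key : ∀ X Y : ι → R, vecDer D X (vecDer D Y a)
      = ∑ i, vecDer D X (Y i) * D i a + ∑ i, ∑ j, X i * Y j * D i (D j a) := by
    intro X Y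
    conv_lhs => rw [vecDer_apply D Y]
    simp only [map_sum, Derivation.leibniz, smul_eq_mul, Finset.sum_add_distrib]
    rw [add_comm]
    congr 1
    · exact Finset.sum_congr rfl fun i _ => mul_comm _ _
    · simp only [vecDer_apply, Finset.mul_sum]
      rw [Finset.sum_comm]
      exact Finset.sum_congr rfl fun i _ => Finset.sum_congr rfl fun j _ => by ring
  have hs : ∑ i, ∑ j, X i * Y j * D i (D j a) = ∑ i, ∑ j, Y i * X j * D i (D j a) := by
    rw [Finset.sum_comm]
    exact Finset.sum_congr rfl fun i _ => Finset.sum_congr rfl fun j _ => by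
      rw [hD]; ring
  rw [key, key, hs, vecDer_apply]
  simp only [vecBracket, sub_mul, Finset.sum_sub_distrib]
  ring

theorem jac_vecBracket (D : ι → Derivation k R R)
    (hD : ∀ i j a, D i (D j a) = D j (D i a)) (X Y : ι → R) :
    jac D (vecBracket D X Y)
      = (jac D Y).map (vecDer D X) + jac D Y * jac D X
        - (jac D X).map (vecDer D Y) - jac D X * jac D Y := by
  ext j i
  simp only [jac, vecBracket, of_apply, map_sub, der_vecDer D hD, Matrix.sub_apply, Matrix.add_apply,
    map_apply, mul_apply]
  simp only [mul_comm]
  ring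

theorem sum_mul_smul (J K : Matrix ι ι R) (M : ι → Matrix ι ι R) (l : ι) :
    ∑ i, (J * K) i l • M i = ∑ i, K i l • ∑ m, J m i • M m := by
  simp only [mul_apply, Finset.sum_smul, Finset.smul_sum, smul_smul]
  rw [Finset.sum_comm]
  exact Finset.sum_congr rfl fun i _ => Finset.sum_congr rfl fun j _ => by rw [mul_comm]

theorem lieConn_vecBracket (D : ι → Derivation k R R)
    (hD : ∀ i j a, D i (D j a) = D j (D i a)) (G : ι → Matrix ι ι R) (X Y : ι → R) (l : ι) :
    lieConn D G (vecBracket D X Y) l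
      = lieTensor D X (lieConn D G Y) l - lieTensor D Y (lieConn D G X) l := by
  have hG : (G l).map (vecDer D (vecBracket D X Y))
      = ((G l).map (vecDer D Y)).map (vecDer D X)
        - ((G l).map (vecDer D X)).map (vecDer D Y) := by
    ext a b
    simp [vecDer_vecBracket D hD]
  unfold lieConn lieTensor
  rw [hG, jac_vecBracket D hD]
  simp only [map_der_add, map_der_sub, map_der_mul, map_der_sum_smul,
    map_der_map_vecDer D hD, Matrix.sub_apply, Matrix.add_apply, sub_smul, add_smul, sum_mul_smul,
    Finset.sum_add_distrib, Finset.sum_sub_distrib, map_apply, smul_add, smul_sub,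
    Finset.sum_mul, Finset.mul_sum, smul_mul_assoc, mul_smul_comm, mul_add, add_mul,
    mul_sub, sub_mul, mul_assoc]
  abel

/-- the contraction `-P^{ls} A^j_{kl} B^k_{js}` -/
def contraction (P : ι → ι → R) (A B : ι → Matrix ι ι R) : R :=
  -∑ l, ∑ s, P l s * trace (A l * B s)

theorem contraction_swap (P : ι → ι → R) (hP : ∀ i j, P i j = -P j i)
    (A B : ι → Matrix ι ι R) : contraction P A B = -contraction P B A := by
  unfold contraction
  rw [neg_inj, Finset.sum_comm, ← Finset.sum_neg_distrib]
  refine Finset.sum_congr rfl fun i _ => ?_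
  rw [← Finset.sum_neg_distrib]
  refine Finset.sum_congr rfl fun j _ => ?_
  rw [trace_mul_comm, hP]
  ring

theorem contraction_sub_left (P : ι → ι → R) (A A' B : ι → Matrix ι ι R) :
    contraction P (fun l => A l - A' l) B = contraction P A B - contraction P A' B := by
  simp only [contraction, sub_mul, trace_sub, mul_sub, Finset.sum_sub_distrib]
  ring

theorem trace_map_der (δ : Derivation k R R) (M : Matrix ι ι R) :
    δ (trace M) = trace (M.map δ) := by
  simp [trace]

theorem vecDer_contraction (D : ι → Derivation k R R) (P : ι → ι → R) (X : ι → R)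
    (hX : ∀ l s, vecDer D X (P l s)
      = ∑ i, jac D X l i * P i s + ∑ i, jac D X s i * P l i)
    (A B : ι → Matrix ι ι R) :
    vecDer D X (contraction P A B)
      = contraction P (lieTensor D X A) B + contraction P A (lieTensor D X B) := by
  have h : ∀ l s, trace (lieTensor D X A l * B s) + trace (A l * lieTensor D X B s)
      = vecDer D X (trace (A l * B s)) + ∑ i, jac D X i l * trace (A i * B s)
        + ∑ i, jac D X i s * trace (A l * B i) := by
    intro l s
    have hc : trace (A l * jac D X * B s) - trace (jac D X * A l * B s)
        + trace (A l * (B s * jac D X)) - trace (A l * (jac D X * B s)) = 0 := by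
      rw [← mul_assoc, ← mul_assoc, trace_mul_comm (A l * B s), mul_assoc (jac D X)]
      ring
    rw [trace_map_der, map_der_mul]
    simp only [lieTensor, add_mul, mul_add, sub_mul, mul_sub, trace_add, trace_sub,
      Finset.sum_mul, Finset.mul_sum, trace_sum, smul_mul_assoc, mul_smul_comm, trace_smul,
      smul_eq_mul]
    linear_combination hc
  have h1 : ∑ l, ∑ s, (∑ i, jac D X l i * P i s) * trace (A l * B s)
      = ∑ l, ∑ s, P l s * ∑ i, jac D X i l * trace (A i * B s) := by
    simp only [Finset.sum_mul, Finset.mul_sum]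
    rw [Finset.sum_comm]
    conv_rhs => rw [Finset.sum_comm]
    refine Finset.sum_congr rfl fun s _ => ?_
    rw [Finset.sum_comm]
    exact Finset.sum_congr rfl fun i _ => Finset.sum_congr rfl fun j _ => by ring
  have h2 : ∑ l, ∑ s, (∑ i, jac D X s i * P l i) * trace (A l * B s)
      = ∑ l, ∑ s, P l s * ∑ i, jac D X i s * trace (A l * B i) := by
    simp only [Finset.sum_mul, Finset.mul_sum]
    refine Finset.sum_congr rfl fun s _ => ?_
    rw [Finset.sum_comm]
    exact Finset.sum_congr rfl fun i _ => Finset.sum_congr rfl fun j _ => by ring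
  have e : contraction P (lieTensor D X A) B + contraction P A (lieTensor D X B)
      = -∑ l, ∑ s, P l s * (trace (lieTensor D X A l * B s)
        + trace (A l * lieTensor D X B s)) := by
    simp only [contraction, mul_add, Finset.sum_add_distrib]
    ring
  rw [e]
  simp only [h, contraction, map_neg, map_sum, Derivation.leibniz, smul_eq_mul, mul_add,
    Finset.sum_add_distrib, ← h1, ← h2, hX]
  simp only [mul_comm (trace _)]
  ring

/-- the Hamiltonian vector field `X_f^j = P^{ij} ∂_i f` -/
def hamVec (D : ι → Derivation k R R) (P : ι → ι → R) (f : R) (j : ι) : R :=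
  ∑ i, P i j * D i f

theorem vecDer_hamVec_poisson (D : ι → Derivation k R R)
    (hD : ∀ i j a, D i (D j a) = D j (D i a)) (P : ι → ι → R) (hP : ∀ i j, P i j = -P j i)
    (hJ : ∀ i j m,
      ∑ s, (P s i * D s (P j m) + P s j * D s (P m i) + P s m * D s (P i j)) = 0)
    (f : R) (l s : ι) :
    vecDer D (hamVec D P f) (P l s)
      = ∑ i, jac D (hamVec D P f) l i * P i s + ∑ i, jac D (hamVec D P f) s i * P l i := by
  have h2 : ∑ i, ∑ a, P a s * D i (D a f) * P l i = -∑ i, ∑ a, P a l * D i (D a f) * P i s := by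
    rw [Finset.sum_comm, ← Finset.sum_neg_distrib]
    refine Finset.sum_congr rfl fun i _ => ?_
    rw [← Finset.sum_neg_distrib]
    refine Finset.sum_congr rfl fun a _ => ?_
    rw [hP l a, hD]
    ring
  have h1 : ∑ i, ∑ a, P a i * D a f * D i (P l s)
      = ∑ i, ∑ a, D a f * D i (P a l) * P i s + ∑ i, ∑ a, D a f * D i (P a s) * P l i := by
    rw [← sub_eq_zero, ← Finset.sum_add_distrib, ← Finset.sum_sub_distrib]
    simp only [← Finset.sum_add_distrib, ← Finset.sum_sub_distrib]
    rw [Finset.sum_comm]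
    refine Finset.sum_eq_zero fun a _ => ?_
    have := congrArg (fun t => -(D a f) * t) (hJ a l s)
    simp only [mul_zero, Finset.mul_sum] at this
    rw [← this]
    refine Finset.sum_congr rfl fun i _ => ?_
    rw [hP a i, hP a s, hP l i, map_neg]
    ring
  simp only [vecDer_apply, jac, of_apply, hamVec, map_sum, Derivation.leibniz, smul_eq_mul,
    Finset.sum_mul, add_mul, Finset.sum_add_distrib, h1, h2]
  ring

/-- the Poisson bracket -/
def poissonBr (D : ι → Derivation k R R) (P : ι → ι → R) (f g : R) : R :=
  ∑ i, ∑ j, P i j * D i f * D j g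

theorem vecDer_hamVec (D : ι → Derivation k R R) (P : ι → ι → R) (f g : R) :
    vecDer D (hamVec D P f) g = poissonBr D P f g := by
  simp only [vecDer_apply, hamVec, poissonBr, Finset.sum_mul]
  rw [Finset.sum_comm]

theorem poissonBr_swap (D : ι → Derivation k R R) (P : ι → ι → R)
    (hP : ∀ i j, P i j = -P j i) (f g : R) : poissonBr D P f g = -poissonBr D P g f := by
  unfold poissonBr
  rw [Finset.sum_comm, ← Finset.sum_neg_distrib]
  refine Finset.sum_congr rfl fun i _ => ?_
  rw [← Finset.sum_neg_distrib]
  refine Finset.sum_congr rfl fun j _ => ?_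
  rw [hP]
  ring

theorem hamVec_poissonBr (D : ι → Derivation k R R)
    (hD : ∀ i j a, D i (D j a) = D j (D i a)) (P : ι → ι → R) (hP : ∀ i j, P i j = -P j i)
    (hJ : ∀ i j m,
      ∑ s, (P s i * D s (P j m) + P s j * D s (P m i) + P s m * D s (P i j)) = 0)
    (f g : R) :
    hamVec D P (poissonBr D P f g) = vecBracket D (hamVec D P f) (hamVec D P g) := by
  funext j
  have e1 : vecDer D (hamVec D P f) (hamVec D P g j)
      = ∑ a, vecDer D (hamVec D P f) (P a j) * D a g
        + ∑ a, P a j * vecDer D (hamVec D P f) (D a g) := by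
    conv_lhs => rw [hamVec]
    simp only [map_sum, Derivation.leibniz, smul_eq_mul, Finset.sum_add_distrib]
    rw [add_comm]
    simp only [mul_comm]
  have e2 : vecDer D (hamVec D P g) (hamVec D P f j)
      = ∑ a, (∑ i, jac D (hamVec D P f) j i * P a i) * D a g := by
    rw [vecDer_apply]
    rw [show hamVec D P g = fun i => ∑ a, P a i * D a g from rfl]
    simp only [Finset.sum_mul, jac, of_apply]
    rw [Finset.sum_comm]
    exact Finset.sum_congr rfl fun i _ => Finset.sum_congr rfl fun j _ => by ring
  have e3 : hamVec D P (poissonBr D P f g) j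
      = ∑ a, P a j * vecDer D (hamVec D P f) (D a g)
        + ∑ a, (∑ i, jac D (hamVec D P f) a i * P i j) * D a g := by
    rw [show hamVec D P (poissonBr D P f g) j = ∑ a, P a j * D a (poissonBr D P f g) from rfl]
    simp only [← vecDer_hamVec, der_vecDer D hD, mul_add,
      Finset.sum_add_distrib, Finset.mul_sum, Finset.sum_mul]
    congr 1
    rw [Finset.sum_comm]
    exact Finset.sum_congr rfl fun i _ => Finset.sum_congr rfl fun j _ => by ring
  rw [vecBracket, e1, e2, e3]
  simp only [vecDer_hamVec_poisson D hD P hP hJ, add_mul, Finset.sum_add_distrib]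
  ring

/-- the Flato–Lichnerowicz–Sternheimer operator `-P^{ls} (L_{X_f}∇)^j_{kl} (L_{X_g}∇)^k_{js}` -/
def flsOp (D : ι → Derivation k R R) (P : ι → ι → R) (G : ι → Matrix ι ι R) (f g : R) : R :=
  contraction P (lieConn D G (hamVec D P f)) (lieConn D G (hamVec D P g))

theorem flsOp_cocycle (D : ι → Derivation k R R)
    (hD : ∀ i j a, D i (D j a) = D j (D i a)) (P : ι → ι → R) (hP : ∀ i j, P i j = -P j i)
    (hJ : ∀ i j m,
      ∑ s, (P s i * D s (P j m) + P s j * D s (P m i) + P s m * D s (P i j)) = 0)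
    (G : ι → Matrix ι ι R) (u v w : R) :
    (poissonBr D P (flsOp D P G u v) w + flsOp D P G (poissonBr D P u v) w)
      + (poissonBr D P (flsOp D P G v w) u + flsOp D P G (poissonBr D P v w) u)
      + (poissonBr D P (flsOp D P G w u) v + flsOp D P G (poissonBr D P w u) v) = 0 := by
  set A : R → ι → Matrix ι ι R := fun f => lieConn D G (hamVec D P f) with hA
  have h1 : ∀ f g h, flsOp D P G (poissonBr D P f g) h
      = contraction P (lieTensor D (hamVec D P f) (A g)) (A h)
        - contraction P (lieTensor D (hamVec D P g) (A f)) (A h) := by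
    intro f g h
    rw [flsOp, hamVec_poissonBr D hD P hP hJ, ← contraction_sub_left]
    congr 1
    funext l
    exact lieConn_vecBracket D hD G _ _ l
  have h2 : ∀ f g h, poissonBr D P (flsOp D P G f g) h
      = contraction P (lieTensor D (hamVec D P h) (A g)) (A f)
        - contraction P (lieTensor D (hamVec D P h) (A f)) (A g) := by
    intro f g h
    rw [poissonBr_swap D P hP, ← vecDer_hamVec, flsOp,
      vecDer_contraction D P _ (vecDer_hamVec_poisson D hD P hP hJ h),
      contraction_swap P hP (lieConn D G (hamVec D P f))]
    ring
  simp only [h1, h2]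
  ring

/-- the second covariant differential of a function -/
def covHess (D : ι → Derivation k R R) (Γ : ι → ι → ι → R) (f : R) (a b : ι) : R :=
  D a (D b f) - ∑ m, Γ m a b * D m f

/-- the third covariant differential of a function -/
def covThird (D : ι → Derivation k R R) (Γ : ι → ι → ι → R) (f : R) (a b c : ι) : R :=
  D a (covHess D Γ f b c) - (∑ m, Γ m a b * covHess D Γ f m c
    + ∑ m, Γ m a c * covHess D Γ f b m)

/-- the covariant differential of a bivector field -/
def covBivector (D : ι → Derivation k R R) (Γ : ι → ι → ι → R) (P : ι → ι → R)
    (a i j : ι) : R :=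
  D a (P i j) + (∑ m, Γ i a m * P m j + ∑ m, Γ j a m * P i m)

/-- the second covariant differential of a bivector field -/
def covBivector₂ (D : ι → Derivation k R R) (Γ : ι → ι → ι → R) (P : ι → ι → R)
    (a b i j : ι) : R :=
  D a (covBivector D Γ P b i j) - ∑ m, Γ m a b * covBivector D Γ P m i j
    + (∑ m, Γ i a m * covBivector D Γ P b m j + ∑ m, Γ j a m * covBivector D Γ P b i m)

/-- the curvature tensor of a connection -/
def covCurv (D : ι → Derivation k R R) (Γ : ι → ι → ι → R) (s a b c : ι) : R :=
  D a (Γ s b c) - D b (Γ s a c) + ∑ t, (Γ s a t * Γ t b c - Γ s b t * Γ t a c)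

/-- the covariant expression of the Lie derivative of a connection along `X_f` -/
def lieConnCov (D : ι → Derivation k R R) (Γ : ι → ι → ι → R) (P : ι → ι → R) (f : R)
    (j a b : ι) : R :=
  (∑ i, P i j * covThird D Γ f a b i)
    + (∑ i, covBivector D Γ P a i j * covHess D Γ f b i)
    + (∑ i, covBivector D Γ P b i j * covHess D Γ f a i)
    + (∑ i, covBivector₂ D Γ P a b i j * D i f)
    + (∑ i, ∑ s, covCurv D Γ j i a b * P s i * D s f)

/-- the Leibniz rule for the covariant derivative of the contraction of a bivector field and a
one-form -/
theorem cov_contract (δ : Derivation k R R) (g T : ι → ι → R) (s : ι → R) (j : ι) :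
    δ (∑ i, T i j * s i) + ∑ m, g j m * ∑ i, T i m * s i
      = ∑ i, (δ (T i j) + (∑ m, g i m * T m j + ∑ m, g j m * T i m)) * s i
        + ∑ i, T i j * (δ (s i) - ∑ m, g m i * s m) := by
  have h1 : ∑ i, (∑ m, g i m * T m j) * s i = ∑ i, T i j * ∑ m, g m i * s m := by
    simp only [Finset.sum_mul, Finset.mul_sum]
    rw [Finset.sum_comm]
    exact Finset.sum_congr rfl fun i _ => Finset.sum_congr rfl fun j _ => by ring
  have h2 : ∑ i, (∑ m, g j m * T i m) * s i = ∑ m, g j m * ∑ i, T i m * s i := by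
    simp only [Finset.sum_mul, Finset.mul_sum]
    rw [Finset.sum_comm]
    exact Finset.sum_congr rfl fun i _ => Finset.sum_congr rfl fun j _ => by ring
  simp only [map_sum, Derivation.leibniz, smul_eq_mul, add_mul, mul_sub,
    Finset.sum_add_distrib, Finset.sum_sub_distrib, h1, h2, mul_comm (s _)]
  ring

theorem lieConnCov_eq_cov_cov (D : ι → Derivation k R R) (Γ : ι → ι → ι → R)
    (P : ι → ι → R) (f : R) (N : ι → ι → R)
    (hN : ∀ b j, N b j = D b (hamVec D P f j) + ∑ m, Γ j b m * hamVec D P f m) (j a b : ι) :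
    lieConnCov D Γ P f j a b
      = D a (N b j) + ∑ m, Γ j a m * N b m - ∑ m, Γ m a b * N m j
        + ∑ i, covCurv D Γ j i a b * hamVec D P f i := by
  have hN' : ∀ b j, N b j = ∑ i, covBivector D Γ P b i j * D i f
      + ∑ i, P i j * covHess D Γ f b i := fun b j =>
    (hN b j).trans (cov_contract (D b) (fun i m => Γ i b m) P (fun i => D i f) j)
  have h1 := cov_contract (D a) (fun i m => Γ i a m) (covBivector D Γ P b) (fun i => D i f) j
  have h2 := cov_contract (D a) (fun i m => Γ i a m) P (covHess D Γ f b) j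
  have h3 : ∑ m, Γ m a b * ∑ i, covBivector D Γ P m i j * D i f
      = ∑ i, (∑ m, Γ m a b * covBivector D Γ P m i j) * D i f := by
    simp only [Finset.sum_mul, Finset.mul_sum]
    rw [Finset.sum_comm]
    exact Finset.sum_congr rfl fun i _ => Finset.sum_congr rfl fun j _ => by ring
  have h4 : ∑ m, Γ m a b * ∑ i, P i j * covHess D Γ f m i
      = ∑ i, P i j * ∑ m, Γ m a b * covHess D Γ f m i := by
    simp only [Finset.mul_sum]
    rw [Finset.sum_comm]
    exact Finset.sum_congr rfl fun i _ => Finset.sum_congr rfl fun j _ => by ring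
  have h5 : ∑ i, ∑ s, covCurv D Γ j i a b * P s i * D s f
      = ∑ i, covCurv D Γ j i a b * hamVec D P f i := by
    simp only [hamVec, Finset.mul_sum, mul_assoc]
  have h6 : ∑ i, P i j * covThird D Γ f a b i
      = ∑ i, P i j * (D a (covHess D Γ f b i) - ∑ m, Γ m a i * covHess D Γ f b m)
        - ∑ i, P i j * ∑ m, Γ m a b * covHess D Γ f m i := by
    rw [← Finset.sum_sub_distrib]
    exact Finset.sum_congr rfl fun i _ => by rw [covThird]; ring
  have h7 : ∑ i, covBivector₂ D Γ P a b i j * D i f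
      = ∑ i, (D a (covBivector D Γ P b i j) + (∑ m, Γ i a m * covBivector D Γ P b m j
          + ∑ m, Γ j a m * covBivector D Γ P b i m)) * D i f
        - ∑ i, (∑ m, Γ m a b * covBivector D Γ P m i j) * D i f := by
    rw [← Finset.sum_sub_distrib]
    exact Finset.sum_congr rfl fun i _ => by rw [covBivector₂]; ring
  simp only [show ∀ i, D a (D i f) - ∑ m, Γ m a i * D m f = covHess D Γ f a i from
    fun _ => rfl] at h1
  simp only [show ∀ i, D a (P i j) + (∑ m, Γ i a m * P m j + ∑ m, Γ j a m * P i m)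
    = covBivector D Γ P a i j from fun _ => rfl] at h2
  rw [lieConnCov, h5, h6, h7]
  simp only [hN', map_add, mul_add, Finset.sum_add_distrib, h3, h4]
  linear_combination -h1 - h2

theorem lieConnCov_eq_lieConn (D : ι → Derivation k R R)
    (hD : ∀ i j a, D i (D j a) = D j (D i a)) (Γ : ι → ι → ι → R)
    (hT : ∀ m i j, Γ m i j = Γ m j i) (P : ι → ι → R) (f : R) (j a b : ι) :
    lieConnCov D Γ P f j a b
      = lieConn D (fun l => of fun j i => Γ j l i) (hamVec D P f) b j a := by
  rw [lieConnCov_eq_cov_cov D Γ P f _ (fun _ _ => rfl)]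
  generalize hamVec D P f = X
  have h1 : ∑ m, Γ j a m * ∑ t, Γ m b t * X t = ∑ i, (∑ t, Γ j a t * Γ t i b) * X i := by
    simp only [Finset.sum_mul, Finset.mul_sum]
    rw [Finset.sum_comm]
    exact Finset.sum_congr rfl fun i _ => Finset.sum_congr rfl fun t _ => by rw [hT t b]; ring
  have h2 : ∑ m, Γ m a b * ∑ t, Γ j m t * X t = ∑ i, (∑ t, Γ j i t * Γ t a b) * X i := by
    simp only [Finset.sum_mul, Finset.mul_sum]
    rw [Finset.sum_comm]
    exact Finset.sum_congr rfl fun i _ => Finset.sum_congr rfl fun t _ => by rw [hT j t]; ring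
  simp only [lieConn, jac, vecDer_apply, covCurv, map_sum, map_add, Derivation.leibniz,
    smul_eq_mul, Matrix.add_apply, Matrix.sub_apply, map_apply, of_apply, mul_apply,
    Matrix.sum_apply, Matrix.smul_apply, mul_add, add_mul, sub_mul, Finset.sum_add_distrib,
    Finset.sum_sub_distrib, h1, h2]
  rw [hD a b]
  simp only [hT j b, hT j _ a, hT _ b a, mul_comm (X _), mul_comm (D _ (X _))]
  ring

end Algebraic

/-- the algebra of smooth functions on the chart -/
def smoothFun (d : ℕ) : Subalgebra ℝ (E d → ℝ) where
  carrier := {f | ContDiff ℝ (⊤ : ℕ∞) f}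
  mul_mem' {f g} (hf : ContDiff ℝ (⊤ : ℕ∞) f) (hg : ContDiff ℝ (⊤ : ℕ∞) g) := by
    change ContDiff ℝ (⊤ : ℕ∞) (f * g)
    exact hf.mul hg
  add_mem' {f g} (hf : ContDiff ℝ (⊤ : ℕ∞) f) (hg : ContDiff ℝ (⊤ : ℕ∞) g) := by
    change ContDiff ℝ (⊤ : ℕ∞) (f + g)
    exact hf.add hg
  algebraMap_mem' c := by
    change ContDiff ℝ (⊤ : ℕ∞) fun _ : E d => c
    exact contDiff_const

theorem smoothFun_contDiff {d : ℕ} (f : smoothFun d) : ContDiff ℝ (⊤ : ℕ∞) f.1 := f.2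

theorem smoothFun_differentiableAt {d : ℕ} (f : smoothFun d) (x : E d) :
    DifferentiableAt ℝ f.1 x :=
  ((smoothFun_contDiff f).differentiable (by simp)).differentiableAt

theorem contDiff_pd {d : ℕ} (i : Fin d) {f : E d → ℝ} (hf : ContDiff ℝ (⊤ : ℕ∞) f) :
    ContDiff ℝ (⊤ : ℕ∞) (pd d i f) :=
  (hf.fderiv_right (m := (⊤ : ℕ∞)) (by simp)).clm_apply contDiff_const

/-- the partial derivative as a derivation of the algebra of smooth functions -/
def pdDer (d : ℕ) (i : Fin d) : Derivation ℝ (smoothFun d) (smoothFun d) :=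
  Derivation.mk'
    { toFun := fun f => ⟨pd d i f.1, contDiff_pd i f.2⟩
      map_add' := fun f g => by
        ext x
        change fderiv ℝ (f.1 + g.1) x _ = fderiv ℝ f.1 x _ + fderiv ℝ g.1 x _
        rw [fderiv_add (smoothFun_differentiableAt f x) (smoothFun_differentiableAt g x)]
        rfl
      map_smul' := fun c f => by
        ext x
        change fderiv ℝ (c • f.1) x _ = c • fderiv ℝ f.1 x _
        rw [fderiv_const_smul (smoothFun_differentiableAt f x)]
        rfl }
    (fun f g => by
      ext x
      change fderiv ℝ (f.1 * g.1) x _ = f.1 x * fderiv ℝ g.1 x _ + g.1 x * fderiv ℝ f.1 x _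
      rw [fderiv_mul (smoothFun_differentiableAt f x) (smoothFun_differentiableAt g x)]
      rfl)

theorem pdDer_apply {d : ℕ} (i : Fin d) (f : smoothFun d) (x : E d) :
    (pdDer d i f).1 x = pd d i f.1 x := rfl

theorem pdDer_comm {d : ℕ} (i j : Fin d) (f : smoothFun d) :
    pdDer d i (pdDer d j f) = pdDer d j (pdDer d i f) := by
  ext x
  change fderiv ℝ (fun y => fderiv ℝ f.1 y _) x _ = fderiv ℝ (fun y => fderiv ℝ f.1 y _) x _
  have h : DifferentiableAt ℝ (fderiv ℝ f.1) x :=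
    (((smoothFun_contDiff f).fderiv_right (m := (⊤ : ℕ∞)) (by simp)).differentiable
      (by simp)).differentiableAt
  rw [fderiv_clm_apply h (differentiableAt_const _), fderiv_clm_apply h (differentiableAt_const _)]
  simpa using (smoothFun_contDiff f).contDiffAt.isSymmSndFDerivAt
    (by simpa using WithTop.coe_le_coe.2 (le_top : (2 : ℕ∞) ≤ ⊤)) _ _

theorem smoothFun_sum_apply {d : ℕ} {α : Type*} (s : Finset α) (f : α → smoothFun d) (x : E d) :
    (∑ i ∈ s, f i).1 x = ∑ i ∈ s, (f i).1 x :=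
  (congrFun (map_sum (smoothFun d).val f s) x).trans (Finset.sum_apply _ _ _)

theorem smoothFun_add_apply {d : ℕ} (f g : smoothFun d) (x : E d) :
    (f + g).1 x = f.1 x + g.1 x := rfl

theorem smoothFun_sub_apply {d : ℕ} (f g : smoothFun d) (x : E d) :
    (f - g).1 x = f.1 x - g.1 x := rfl

theorem smoothFun_mul_apply {d : ℕ} (f g : smoothFun d) (x : E d) :
    (f * g).1 x = f.1 x * g.1 x := rfl

theorem smoothFun_neg_apply {d : ℕ} (f : smoothFun d) (x : E d) :
    (-f).1 x = -f.1 x := rfl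

section Coordinates

variable {d : ℕ} (Γ : Fin d → Fin d → Fin d → smoothFun d) (P : Fin d → Fin d → smoothFun d)
  (f : smoothFun d) (x : E d)

theorem d1f_eq (Γ : Christoffel d) (i : Fin d) : d1f Γ f.1 x i = (pdDer d i f).1 x := by
  simp [d1f, nablaF, covD, pdDer_apply]

theorem d2f_eq (i j : Fin d) :
    d2f (fun x k i j => (Γ k i j).1 x) f.1 x i j = (covHess (pdDer d) Γ f i j).1 x := by
  have h1 : ∀ y (I : Fin 1 → Fin d) K, nablaF (fun x k i j => (Γ k i j).1 x) 1 f.1 y I K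
      = (pdDer d (I 0) f).1 y := fun y I K => by simp [nablaF, covD, pdDer_apply]
  rw [d2f, nablaF]
  simp [covD, h1, covHess, smoothFun_sub_apply, smoothFun_sum_apply, smoothFun_mul_apply,
    pdDer_apply, Fin.tail, Function.update]
  rfl

theorem nablaF_two (y : E d) (I : Fin 2 → Fin d) (K : Fin 0 → Fin d) :
    nablaF (fun x k i j => (Γ k i j).1 x) 2 f.1 y I K
      = d2f (fun x k i j => (Γ k i j).1 x) f.1 y (I 0) (I 1) := by
  rw [d2f]
  congr 1
  · ext i; fin_cases i <;> rfl
  · exact Subsingleton.elim _ _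

theorem d3f_eq (i j k : Fin d) :
    d3f (fun x k i j => (Γ k i j).1 x) f.1 x i j k = (covThird (pdDer d) Γ f i j k).1 x := by
  rw [d3f, nablaF]
  simp [covD, nablaF_two, d2f_eq, covThird, smoothFun_sub_apply, smoothFun_sum_apply,
    smoothFun_mul_apply, smoothFun_add_apply, pdDer_apply, Fin.tail, Function.update,
    Fin.sum_univ_succ]

theorem dP_eq (a i j : Fin d) :
    dP (fun x k i j => (Γ k i j).1 x) (fun x i j => (P i j).1 x) x a i j
      = (covBivector (pdDer d) Γ P a i j).1 x := by
  simp [dP, covD, Ptensor, covBivector, smoothFun_sum_apply,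
    smoothFun_mul_apply, smoothFun_add_apply, pdDer_apply, Fin.tail, Function.update,
    Fin.sum_univ_succ]

theorem covD_Ptensor (y : E d) (I : Fin 1 → Fin d) (K : Fin 2 → Fin d) :
    covD (fun x k i j => (Γ k i j).1 x) (Ptensor fun x i j => (P i j).1 x) y I K
      = dP (fun x k i j => (Γ k i j).1 x) (fun x i j => (P i j).1 x) y (I 0) (K 0) (K 1) := by
  rw [dP]
  congr 1
  · ext i; fin_cases i; rfl
  · ext i; fin_cases i <;> rfl

theorem d2P_eq (a b i j : Fin d) :
    d2P (fun x k i j => (Γ k i j).1 x) (fun x i j => (P i j).1 x) x a b i j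
      = (covBivector₂ (pdDer d) Γ P a b i j).1 x := by
  rw [d2P, covD]
  simp [covD_Ptensor, dP_eq, covBivector₂, smoothFun_sum_apply, smoothFun_sub_apply,
    smoothFun_mul_apply, smoothFun_add_apply, pdDer_apply, Fin.tail, Function.update,
    Fin.sum_univ_succ]

theorem curv_eq (s a b c : Fin d) :
    curv (fun x k i j => (Γ k i j).1 x) x s a b c = (covCurv (pdDer d) Γ s a b c).1 x := by
  simp [curv, covCurv, smoothFun_sum_apply, smoothFun_sub_apply, smoothFun_mul_apply,
    smoothFun_add_apply, pdDer_apply]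

theorem LXnabla_eq (j a b : Fin d) :
    LXnabla (fun x k i j => (Γ k i j).1 x) (fun x i j => (P i j).1 x) f.1 x j a b
      = (lieConnCov (pdDer d) Γ P f j a b).1 x := by
  simp only [LXnabla, lieConnCov, d1f_eq, d2f_eq, d3f_eq, dP_eq, d2P_eq, curv_eq,
    smoothFun_sum_apply, smoothFun_mul_apply, smoothFun_add_apply]

theorem pbr_eq (g : smoothFun d) :
    pbr (fun x i j => (P i j).1 x) f.1 g.1 = (poissonBr (pdDer d) P f g).1 := by
  funext x
  simp only [pbr, poissonBr, smoothFun_sum_apply, smoothFun_mul_apply, pdDer_apply]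

theorem S3_eq (hT : ∀ m i j, Γ m i j = Γ m j i) (g : smoothFun d) :
    S3 (fun x k i j => (Γ k i j).1 x) (fun x i j => (P i j).1 x) f.1 g.1
      = (flsOp (pdDer d) P (fun l => .of fun j i => Γ j l i) f g).1 := by
  funext x
  have hL := lieConnCov_eq_lieConn (pdDer d) pdDer_comm Γ hT P
  simp only [S3, LXnabla_eq, flsOp, contraction, smoothFun_neg_apply, smoothFun_sum_apply,
    smoothFun_mul_apply, Matrix.trace, Matrix.diag_apply, Matrix.mul_apply, hL, Finset.mul_sum]
  rw [neg_inj]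
  refine Finset.sum_congr rfl fun l _ => Finset.sum_congr rfl fun s _ => ?_
  rw [Finset.sum_comm]
  refine Finset.sum_congr rfl fun j _ => Finset.sum_congr rfl fun i _ => ?_
  ring

end Coordinates

/-- the Chevalley cocycle identity
`Σ_{cyclic} {S³(u,v), w} + S³({u,v}, w) = 0`. -/
theorem S3_is_chevalley_cocycle
    (d : ℕ) (Γ : Christoffel d) (hΓ : SmoothChristoffel Γ) (hT : Torsionfree Γ)
    (P : E d → Fin d → Fin d → ℝ) (hPsm : ∀ i j, ContDiff ℝ (⊤ : ℕ∞) (fun x => P x i j))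
    (hPskew : ∀ x i j, P x i j = - P x j i)
    (hPoisson : ∀ x i j k,
      ∑ s, (P x s i * pd d s (fun z => P z j k) x
            + P x s j * pd d s (fun z => P z k i) x
            + P x s k * pd d s (fun z => P z i j) x) = 0)
    (u v w : E d → ℝ)
    (hu : ContDiff ℝ (⊤ : ℕ∞) u) (hv : ContDiff ℝ (⊤ : ℕ∞) v) (hw : ContDiff ℝ (⊤ : ℕ∞) w)
    (x : E d) :
    (pbr P (S3 Γ P u v) w x + S3 Γ P (pbr P u v) w x)
      + (pbr P (S3 Γ P v w) u x + S3 Γ P (pbr P v w) u x)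
      + (pbr P (S3 Γ P w u) v x + S3 Γ P (pbr P w u) v x) = 0 := by
  let D := pdDer d
  let Γ' : Fin d → Fin d → Fin d → smoothFun d := fun k i j => ⟨_, hΓ k i j⟩
  let P' : Fin d → Fin d → smoothFun d := fun i j => ⟨_, hPsm i j⟩
  have hT' : ∀ m i j, Γ' m i j = Γ' m j i := fun m i j => by
    ext x; exact hT x m i j
  have hP' : ∀ i j, P' i j = -P' j i := fun i j => by
    ext x; exact hPskew x i j
  have hJ' : ∀ i j m, ∑ s, (P' s i * D s (P' j m) + P' s j * D s (P' m i)
      + P' s m * D s (P' i j)) = 0 := fun i j m => by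
    ext x
    refine Eq.trans ?_ (hPoisson x i j m)
    exact smoothFun_sum_apply _ _ x
  have hS : ∀ f g : smoothFun d, S3 Γ P f.1 g.1
      = (flsOp D P' (fun l => .of fun j i => Γ' j l i) f g).1 := fun f g => S3_eq Γ' P' f hT' g
  have hbr : ∀ f g : smoothFun d, pbr P f.1 g.1 = (poissonBr D P' f g).1 := pbr_eq P'
  have main : ∀ u v w : smoothFun d,
      (pbr P (S3 Γ P u.1 v.1) w.1 x + S3 Γ P (pbr P u.1 v.1) w.1 x)
      + (pbr P (S3 Γ P v.1 w.1) u.1 x + S3 Γ P (pbr P v.1 w.1) u.1 x)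
      + (pbr P (S3 Γ P w.1 u.1) v.1 x + S3 Γ P (pbr P w.1 u.1) v.1 x) = 0 := fun u v w => by
    simp only [hS, hbr]
    exact congrFun (congrArg Subtype.val (flsOp_cocycle D pdDer_comm P' hP' hJ' _ u v w)) x
  exact main ⟨u, hu⟩ ⟨v, hv⟩ ⟨w, hw⟩
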